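/- (Uniqueness part of Theorem on Weyl coefficients.) Suppose two systems of coefficients (a_1,…,a_l, b_1,…,b_l) and (ã_1,…,ã_l, b̃_1,…,b̃_l), with a_n ≠ 0 and ã_n ≠ 0 for n = 1,…,l−1 and a_l = ã_l = 1, have the same Weyl coefficients M_1,…,M_{2l}. Then a_n = ã_n for n = 1,…,l−1 and b_n = b̃_n for n = 1,…,l. -/

import Mathlib

open Polynomial

/-!
With `A = a 1 * ⋯ * a l`, the sequence `u n = A * (P (l + 1) * Q n - Q (l + 1) * P n)` is a solution
with `u (l + 1) = 0`, and constancy of the weighted Casoratian of `P` and `Q` gives `u l = 1`.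
Running the recurrence downwards, every `u n` is therefore monic of degree `l - n`.
Moreover `u 0 = A * P (l + 1)` and `u 1 = -A * Q (l + 1)`, so by the usual uniqueness argument for
Padé approximants equal Weyl coefficients force `u 1 * u' 0 = u 0 * u' 1`. If such a relation
holds at `n`, the recurrences turn it into
`(b - b') * u (n + 1) * u' (n + 1) + a * u (n + 2) * u' (n + 1) - a' * u' (n + 2) * u (n + 1) = 0`,
with the coefficients taken at `n + 1`. The top coefficient gives `b = b'`, the next one `a = a'`,
and cancelling `a` (a unit, as a factor of `A`) leaves the relation at `n + 1`.
-/

lemma degree_mul_lt_of_le_of_lt {R : Type*} [Semiring R] {p q : R[X]} {d e : ℕ}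
    (hp : p.degree ≤ d) (hq : q.degree < e) :
    (p * q).degree < (d + e : ℕ) :=
  calc
    (p * q).degree ≤ p.degree + q.degree := degree_mul_le p q
    _ ≤ d + q.degree := by gcongr
    _ < d + e := WithBot.add_lt_add_left (WithBot.natCast_ne_bot d) hq
    _ = (d + e : ℕ) := (Nat.cast_add d e).symm

section WeylUniqueness

variable {R : Type*} [CommRing R] {l n : ℕ} {a b a' b' : ℕ → R} {y y' z P Q P' Q' u u' : ℕ → R[X]}

/-- Uniqueness of Padé approximants at infinity: if `-S / X ^ N` is approximated by both `q / p`
and `q' / p'` to sufficiently high order, the two fractions agree. -/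
lemma mul_eq_mul_of_degree_X_pow_mul_add_lt {p q p' q' S : R[X]} {N d e : ℕ} (hN : d + e ≤ N)
    (hp : p.degree ≤ d) (hp' : p'.degree ≤ d)
    (h : (X ^ N * q + p * S).degree < (e : WithBot ℕ))
    (h' : (X ^ N * q' + p' * S).degree < (e : WithBot ℕ)) :
    q * p' = p * q' := by
  nontriviality R
  have hlt : ((q * p' - p * q') * X ^ N).degree < ((d + e : ℕ) : WithBot ℕ) := by
    have hcombine : (q * p' - p * q') * X ^ N =
        p' * (X ^ N * q + p * S) - p * (X ^ N * q' + p' * S) := by ring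
    rw [hcombine]
    exact (degree_sub_le _ _).trans_lt
      (max_lt (degree_mul_lt_of_le_of_lt hp' h) (degree_mul_lt_of_le_of_lt hp h'))
  by_contra hne
  rw [degree_mul_X_pow, degree_eq_natDegree (sub_ne_zero.2 hne)] at hlt
  norm_cast at hlt
  omega

/-- The discrete Wronskian of two sequences, at the sites `n` and `n + 1`. -/
noncomputable def casoratian (y z : ℕ → R[X]) (n : ℕ) : R[X] :=
  y (n + 1) * z n - y n * z (n + 1)

/-- `y` solves the difference equation with coefficients `a`, `b` at the sites `1, …, l`; only the
values `y 0, …, y (l + 1)` are constrained. -/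
def IsSolution (l : ℕ) (a b : ℕ → R) (y : ℕ → R[X]) : Prop :=
  ∀ n, 1 ≤ n → n ≤ l → C (a n) * y (n + 1) + C (b n) * y n + y (n - 1) = X * y n

namespace IsSolution

lemma apply_eq (h : IsSolution l a b y) (hn : n < l) :
    y n = (X - C (b (n + 1))) * y (n + 1) - C (a (n + 1)) * y (n + 2) := by
  have hrec : C (a (n + 1)) * y (n + 2) + C (b (n + 1)) * y (n + 1) + y n = X * y (n + 1) :=
    h (n + 1) n.succ_pos hn
  linear_combination hrec

lemma mul_sub_mul (hy : IsSolution l a b y) (hz : IsSolution l a b z) (p q : R[X]) :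
    IsSolution l a b fun n ↦ p * y n - q * z n := fun n h₁ hn ↦ by
  linear_combination p * hy n h₁ hn - q * hz n h₁ hn

lemma casoratian_eq (hy : IsSolution l a b y) (hy' : IsSolution l a' b' y') (hn : n < l) :
    casoratian y y' n = C (b (n + 1) - b' (n + 1)) * (y (n + 1) * y' (n + 1)) +
      (C (a (n + 1)) * (y' (n + 1) * y (n + 2)) - C (a' (n + 1)) * (y (n + 1) * y' (n + 2))) := by
  rw [casoratian, hy.apply_eq hn, hy'.apply_eq hn, C_sub]
  ring

lemma prod_mul_casoratian (hy : IsSolution l a b y) (hz : IsSolution l a b z) (hn : n ≤ l) :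
    C (∏ k ∈ Finset.Icc 1 n, a k) * casoratian y z n = casoratian y z 0 := by
  induction n with
  | zero => simp
  | succ n ih =>
    rw [← ih (by omega), hy.casoratian_eq hz hn, Finset.prod_Icc_succ_top (by omega), casoratian,
      sub_self, C_0, C_mul]
    ring

end IsSolution

/-- A solution normalised at the right end by `u l = 1`, `u (l + 1) = 0`: the solution selected
by the right boundary condition, as Weyl solutions are. -/
structure IsWeylSolution (l : ℕ) (a b : ℕ → R) (u : ℕ → R[X]) : Prop where
  isSolution : IsSolution l a b u
  apply_last : u l = 1
  apply_last_succ : u (l + 1) = 0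

namespace IsWeylSolution

lemma isMonicOfDegree_and_degree_succ_lt [Nontrivial R] (hu : IsWeylSolution l a b u)
    (hn : n ≤ l) : IsMonicOfDegree (u n) (l - n) ∧ (u (n + 1)).degree < (l - n : ℕ) := by
  induction hn using Nat.decreasingInduction with
  | self => simp [hu.apply_last, hu.apply_last_succ]
  | of_succ n hn ih =>
    obtain ⟨hmonic, hdeg⟩ := ih
    rw [hu.isSolution.apply_eq hn, show l - n = 1 + (l - (n + 1)) by omega]
    refine ⟨((isMonicOfDegree_X_sub_one _).mul hmonic).sub ?_, ?_⟩
    · calc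
        _ ≤ (u (n + 2)).natDegree := natDegree_C_mul_le _ _
        _ ≤ l - (n + 1) := natDegree_le_of_degree_le hdeg.le
        _ < 1 + (l - (n + 1)) := by omega
    · rw [degree_eq_natDegree hmonic.ne_zero, hmonic.natDegree_eq]
      norm_cast
      omega

lemma isMonicOfDegree [Nontrivial R] (hu : IsWeylSolution l a b u) (hn : n ≤ l) :
    IsMonicOfDegree (u n) (l - n) :=
  (hu.isMonicOfDegree_and_degree_succ_lt hn).1

lemma degree_le [Nontrivial R] (hu : IsWeylSolution l a b u) (hn : n ≤ l) :
    (u n).degree ≤ (l - n : ℕ) :=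
  natDegree_le_iff_degree_le.1 (hu.isMonicOfDegree hn).natDegree_eq.le

lemma degree_succ_lt [Nontrivial R] (hu : IsWeylSolution l a b u) (hn : n ≤ l) :
    (u (n + 1)).degree < (l - n : ℕ) :=
  (hu.isMonicOfDegree_and_degree_succ_lt hn).2

lemma b_eq_of_casoratian_eq_zero [Nontrivial R] (hu : IsWeylSolution l a b u)
    (hu' : IsWeylSolution l a' b' u') (hn : n < l) (h : casoratian u u' n = 0) :
    b (n + 1) = b' (n + 1) := by
  have hmonic := (hu.isMonicOfDegree hn).mul (hu'.isMonicOfDegree hn)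
  set d := l - (n + 1)
  have hlower : (C (a (n + 1)) * (u' (n + 1) * u (n + 2)) -
      C (a' (n + 1)) * (u (n + 1) * u' (n + 2))).degree < (d + d : ℕ) := by
    simp only [← smul_eq_C_mul]
    exact (degree_sub_le _ _).trans_lt (max_lt
      ((degree_smul_le _ _).trans_lt
        (degree_mul_lt_of_le_of_lt (hu'.degree_le hn) (hu.degree_succ_lt hn)))
      ((degree_smul_le _ _).trans_lt
        (degree_mul_lt_of_le_of_lt (hu.degree_le hn) (hu'.degree_succ_lt hn))))
  have htop := congrArg (coeff · (d + d)) (hu.isSolution.casoratian_eq hu'.isSolution hn)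
  simp only [h, coeff_zero, coeff_add, coeff_C_mul, coeff_eq_zero_of_degree_lt hlower,
    ((isMonicOfDegree_iff _ _).1 hmonic).2, mul_one, add_zero] at htop
  exact sub_eq_zero.1 htop.symm

lemma C_mul_eq_of_casoratian_eq_zero [Nontrivial R] (hu : IsWeylSolution l a b u)
    (hu' : IsWeylSolution l a' b' u') (hn : n < l) (h : casoratian u u' n = 0) :
    C (a (n + 1)) * (u' (n + 1) * u (n + 2)) = C (a' (n + 1)) * (u (n + 1) * u' (n + 2)) := by
  have hcas := hu.isSolution.casoratian_eq hu'.isSolution hn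
  rw [h, hu.b_eq_of_casoratian_eq_zero hu' hn h, sub_self, C_0, zero_mul, zero_add] at hcas
  exact sub_eq_zero.1 hcas.symm

lemma a_eq_of_casoratian_eq_zero [Nontrivial R] (hu : IsWeylSolution l a b u)
    (hu' : IsWeylSolution l a' b' u') (hn : n + 1 < l) (h : casoratian u u' n = 0) :
    a (n + 1) = a' (n + 1) := by
  have hmonic := (hu'.isMonicOfDegree hn.le).mul (hu.isMonicOfDegree hn)
  have hmonic' := (hu.isMonicOfDegree hn.le).mul (hu'.isMonicOfDegree hn)
  have htop := congrArg (coeff · (l - (n + 1) + (l - (n + 2))))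
    (hu.C_mul_eq_of_casoratian_eq_zero hu' (by omega) h)
  simpa only [coeff_C_mul, ((isMonicOfDegree_iff _ _).1 hmonic).2,
    ((isMonicOfDegree_iff _ _).1 hmonic').2, mul_one] using htop

lemma casoratian_eq_zero [Nontrivial R] (hu : IsWeylSolution l a b u)
    (hu' : IsWeylSolution l a' b' u') (ha : ∀ n, 1 ≤ n → n < l → IsUnit (a n))
    (h : casoratian u u' 0 = 0) (hn : n < l) : casoratian u u' n = 0 := by
  induction n with
  | zero => exact h
  | succ n ih =>
    have hcas := ih (by omega)
    have hmul := hu.C_mul_eq_of_casoratian_eq_zero hu' (by omega) hcas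
    rw [← hu.a_eq_of_casoratian_eq_zero hu' hn hcas] at hmul
    have hcancel := ((ha (n + 1) n.succ_pos hn).map C).mul_left_cancel hmul
    rw [casoratian, ← hcancel]
    ring

end IsWeylSolution

/-- The solutions `P` and `Q` of the difference equation with the initial conditions that are used
to define the Weyl coefficients. -/
structure IsFundamentalPair (l : ℕ) (a b : ℕ → R) (P Q : ℕ → R[X]) : Prop where
  P_zero : P 0 = 0
  P_one : P 1 = 1
  Q_zero : Q 0 = 1
  Q_one : Q 1 = 0
  isSolution_P : IsSolution l a b P
  isSolution_Q : IsSolution l a b Q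

/-- The Weyl solution, written in terms of the fundamental pair. -/
noncomputable def weylSolution (l : ℕ) (a : ℕ → R) (P Q : ℕ → R[X]) (n : ℕ) : R[X] :=
  C (∏ k ∈ Finset.Icc 1 l, a k) * P (l + 1) * Q n -
    C (∏ k ∈ Finset.Icc 1 l, a k) * Q (l + 1) * P n

namespace IsFundamentalPair

lemma prod_mul_casoratian (h : IsFundamentalPair l a b P Q) :
    C (∏ k ∈ Finset.Icc 1 l, a k) * casoratian P Q l = 1 := by
  rw [h.isSolution_P.prod_mul_casoratian h.isSolution_Q le_rfl]
  simp [casoratian, h.P_zero, h.P_one, h.Q_zero]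

lemma isUnit_a (h : IsFundamentalPair l a b P Q) (h₁ : 1 ≤ n) (hn : n ≤ l) : IsUnit (a n) :=
  IsUnit.prod_iff.1 (isUnit_C.1 (.of_mul_eq_one _ h.prod_mul_casoratian)) n
    (Finset.mem_Icc.2 ⟨h₁, hn⟩)

lemma isWeylSolution (h : IsFundamentalPair l a b P Q) :
    IsWeylSolution l a b (weylSolution l a P Q) where
  isSolution := h.isSolution_Q.mul_sub_mul h.isSolution_P _ _
  apply_last := by
    rw [← h.prod_mul_casoratian, weylSolution, casoratian]
    ring
  apply_last_succ := by
    rw [weylSolution]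
    ring

lemma degree_weylSolution_lt (h : IsFundamentalPair l a b P Q) {S : R[X]} {N e : ℕ}
    (hS : (X ^ N * Q (l + 1) + P (l + 1) * S).degree < (e : WithBot ℕ)) :
    (X ^ N * -weylSolution l a P Q 1 + weylSolution l a P Q 0 * S).degree < (e : WithBot ℕ) := by
  have hsmul : X ^ N * -weylSolution l a P Q 1 + weylSolution l a P Q 0 * S =
      (∏ k ∈ Finset.Icc 1 l, a k) • (X ^ N * Q (l + 1) + P (l + 1) * S) := by
    simp only [weylSolution, h.P_zero, h.P_one, h.Q_zero, h.Q_one, smul_eq_C_mul]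
    ring
  exact hsmul ▸ (degree_smul_le _ _).trans_lt hS

lemma casoratian_weylSolution_zero [Nontrivial R] (h : IsFundamentalPair l a b P Q)
    (h' : IsFundamentalPair l a' b' P' Q') {S : R[X]}
    (hS : (X ^ (2 * l) * Q (l + 1) + P (l + 1) * S).degree < (l : WithBot ℕ))
    (hS' : (X ^ (2 * l) * Q' (l + 1) + P' (l + 1) * S).degree < (l : WithBot ℕ)) :
    casoratian (weylSolution l a P Q) (weylSolution l a' P' Q') 0 = 0 := by
  have hcross := mul_eq_mul_of_degree_X_pow_mul_add_lt (two_mul l).ge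
    (h.isWeylSolution.degree_le l.zero_le) (h'.isWeylSolution.degree_le l.zero_le)
    (h.degree_weylSolution_lt hS) (h'.degree_weylSolution_lt hS')
  rw [casoratian]
  linear_combination -hcross

end IsFundamentalPair

theorem weyl_coefficients_uniqueness_general (h : IsFundamentalPair l a b P Q)
    (h' : IsFundamentalPair l a' b' P' Q') (S : R[X])
    (hS : (X ^ (2 * l) * Q (l + 1) + P (l + 1) * S).degree < (l : WithBot ℕ))
    (hS' : (X ^ (2 * l) * Q' (l + 1) + P' (l + 1) * S).degree < (l : WithBot ℕ)) :
    (∀ n, 1 ≤ n → n < l → a n = a' n) ∧ (∀ n, 1 ≤ n → n ≤ l → b n = b' n) := by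
  nontriviality R
  have hu := h.isWeylSolution
  have hu' := h'.isWeylSolution
  have hcas : ∀ n < l, casoratian _ _ n = 0 := fun n ↦ hu.casoratian_eq_zero hu'
    (fun _ h₁ hn ↦ h.isUnit_a h₁ hn.le) (h.casoratian_weylSolution_zero h' hS hS')
  constructor <;> rintro (_ | n) h₁ hn
  · contradiction
  · exact hu.a_eq_of_casoratian_eq_zero hu' hn (hcas n (by omega))
  · contradiction
  · exact hu.b_eq_of_casoratian_eq_zero hu' hn (hcas n hn)

end WeylUniqueness

/-- Uniqueness part of the theorem on Weyl coefficients: two systems with `a n ≠ 0`,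
`ã n ≠ 0` for `n = 1,…,l-1`, `a l = ã l = 1`, having the same Weyl coefficients
`M 1, …, M (2l)`, coincide: `a n = ã n` for `n = 1,…,l-1` and `b n = b̃ n` for `n = 1,…,l`. -/
theorem weyl_coefficients_uniqueness (l : ℕ) (hl : 1 ≤ l)
    (a b a' b' : ℕ → ℂ)
    (ha : ∀ n, 1 ≤ n → n ≤ l - 1 → a n ≠ 0) (hal : a l = 1)
    (ha' : ∀ n, 1 ≤ n → n ≤ l - 1 → a' n ≠ 0) (hal' : a' l = 1)
    (P Q P' Q' : ℕ → Polynomial ℂ)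
    (hP0 : P 0 = 0) (hP1 : P 1 = 1) (hQ0 : Q 0 = 1) (hQ1 : Q 1 = 0)
    (hP'0 : P' 0 = 0) (hP'1 : P' 1 = 1) (hQ'0 : Q' 0 = 1) (hQ'1 : Q' 1 = 0)
    (hPrec : ∀ n, 1 ≤ n → n ≤ l →
      C (a n) * P (n + 1) + C (b n) * P n + P (n - 1) = X * P n)
    (hQrec : ∀ n, 1 ≤ n → n ≤ l →
      C (a n) * Q (n + 1) + C (b n) * Q n + Q (n - 1) = X * Q n)
    (hP'rec : ∀ n, 1 ≤ n → n ≤ l →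
      C (a' n) * P' (n + 1) + C (b' n) * P' n + P' (n - 1) = X * P' n)
    (hQ'rec : ∀ n, 1 ≤ n → n ≤ l →
      C (a' n) * Q' (n + 1) + C (b' n) * Q' n + Q' (n - 1) = X * Q' n)
    (M : ℕ → ℂ)
    (hM : (X ^ (2 * l) * Q (l + 1) +
        P (l + 1) * ∑ k ∈ Finset.Icc 1 (2 * l), C (M k) * X ^ (2 * l - k)).degree
        ≤ ((l - 1 : ℕ) : WithBot ℕ))
    (hM' : (X ^ (2 * l) * Q' (l + 1) +
        P' (l + 1) * ∑ k ∈ Finset.Icc 1 (2 * l), C (M k) * X ^ (2 * l - k)).degree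
        ≤ ((l - 1 : ℕ) : WithBot ℕ)) :
    (∀ n, 1 ≤ n → n ≤ l - 1 → a n = a' n) ∧ (∀ n, 1 ≤ n → n ≤ l → b n = b' n) := by
  have hlt : ((l - 1 : ℕ) : WithBot ℕ) < l := by exact_mod_cast Nat.sub_one_lt_of_lt hl
  obtain ⟨h_a, h_b⟩ := weyl_coefficients_uniqueness_general
    ⟨hP0, hP1, hQ0, hQ1, hPrec, hQrec⟩ ⟨hP'0, hP'1, hQ'0, hQ'1, hP'rec, hQ'rec⟩ _
    (hM.trans_lt hlt) (hM'.trans_lt hlt)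
  exact ⟨fun n h₁ hn ↦ h_a n h₁ (by omega), h_b⟩
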